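/- arXiv:2311.01082 — 2 statements merged into one kernel-verified Lean document; each statement's English description precedes it below -/
import Mathlib

section
/- For every integer r ≥ 1, the families 𝓕(H(3,0,r)) and 𝓕(H(3,1,r)) are feasible; that is, the family of all graphs with no induced copy of K_3 ∪ rK_1 (a triangle plus r isolated vertices) is feasible, and the family of all graphs with no induced copy of (K_3 ∖ K_2) ∪ rK_1 (a path on three vertices plus r isolated vertices) is feasible. For r = 0, neither family is feasible. -/
open SimpleGraph

/-- `(n, m)` is a feasible pair for a family `F` of finite simple graphs
(given, for each number of vertices `n`, as a predicate on simple graphs on `Fin n`):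
some member of the family has exactly `n` vertices and exactly `m` edges. -/
def FeasiblePair (F : ∀ n : ℕ, SimpleGraph (Fin n) → Prop) (n m : ℕ) : Prop :=
  ∃ G : SimpleGraph (Fin n), F n G ∧ G.edgeSet.ncard = m

/-- A family of finite simple graphs is feasible if every pair `(n, m)` with
`n ≥ 1` and `0 ≤ m ≤ n(n-1)/2` is feasible for it. -/
def Feasible (F : ∀ n : ℕ, SimpleGraph (Fin n) → Prop) : Prop :=
  ∀ n m : ℕ, 1 ≤ n → m ≤ n * (n - 1) / 2 → FeasiblePair F n m

/-- `G` is contained in `H` as an induced subgraph: there is an injective map of the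
vertices of `G` into the vertices of `H` under which adjacency in `H` holds
if and only if it holds in `G`. -/
def IndContains {α β : Type*} (G : SimpleGraph α) (H : SimpleGraph β) : Prop :=
  ∃ f : α ↪ β, ∀ a b : α, H.Adj (f a) (f b) ↔ G.Adj a b

/-- The family `𝓕(G)` of all induced `G`-free finite simple graphs. -/
def IndFreeFamily {α : Type*} (G : SimpleGraph α) :
    ∀ n : ℕ, SimpleGraph (Fin n) → Prop :=
  fun _ H => ¬ IndContains G H

/-- The graph `H(p,q,r) = (K_p ∖ K_{1,q}) ∪ rK_1`: the complete graph on the `p`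
left-hand vertices, from which the `q` edges joining the vertex `0` to the vertices
`1, …, q` have been removed, together with `r` isolated right-hand vertices. -/
def Hgraph (p q r : ℕ) : SimpleGraph (Fin p ⊕ Fin r) :=
  SimpleGraph.fromRel (fun a b =>
    ∃ i j : Fin p, a = Sum.inl i ∧ b = Sum.inl j ∧
      ¬ ((i.val = 0 ∧ 1 ≤ j.val ∧ j.val ≤ q) ∨ (j.val = 0 ∧ 1 ≤ i.val ∧ i.val ≤ q)))

/-!
A pair `(n + 1, m)` with `m ≥ n` arises from `(n, m - n)` by adding a universal vertex, and this
creates no induced copy of a graph `H` that has no universal vertex of its own. It then remains to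
realize every `m < n` on `n + 1` vertices. A forest does this, and so does a disjoint union of
triangles, edges and isolated vertices; hence `𝓕(H)` is feasible as soon as `H` has no universal
vertex and contains a cycle or an induced path on three vertices. The graph `H(p,0,r)` with `p ≥ 3`
contains a triangle, `H(p,1,r)` contains an induced path on three vertices, and neither has a
universal vertex once `r ≥ 1`.

For `r = 0` the complement of `H` has at most one edge. Such a graph is determined up to
isomorphism by its numbers of vertices and edges, so no graph in `𝓕(H)` has those numbers.
-/

/-- A cluster graph is a disjoint union of complete graphs; it is encoded here by the absence of an
induced path on three vertices. -/
def IsClusterGraph {V : Type*} (G : SimpleGraph V) : Prop :=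
  ∀ ⦃a b c : V⦄, G.Adj a b → G.Adj b c → a ≠ c → G.Adj a c

section Graphs

variable {V W : Type*} {G : SimpleGraph V} {H : SimpleGraph W}

theorem indContains_iff_isIndContained : IndContains G H ↔ G ⊴ H :=
  ⟨fun ⟨f, hf⟩ ↦ ⟨⟨f, hf _ _⟩⟩, fun ⟨f⟩ ↦ ⟨f.toEmbedding, fun _ _ ↦ f.map_adj_iff⟩⟩

theorem ncard_edgeSet_congr (e : G ≃g H) : G.edgeSet.ncard = H.edgeSet.ncard :=
  Nat.card_congr e.mapEdgeSet

theorem ncard_edgeSet_sum [Finite V] [Finite W] :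
    (G ⊕g H).edgeSet.ncard = G.edgeSet.ncard + H.edgeSet.ncard :=
  (Nat.card_congr edgeSetSumEquiv).trans Nat.card_sum

theorem ncard_edgeSet_top [Fintype V] :
    (⊤ : SimpleGraph V).edgeSet.ncard = (Fintype.card V).choose 2 := by
  classical
  rw [← coe_edgeFinset, Set.ncard_coe_finset, card_edgeFinset_top_eq_card_choose_two]

theorem ncard_edgeSet_add_compl [Fintype V] (G : SimpleGraph V) :
    G.edgeSet.ncard + Gᶜ.edgeSet.ncard = (Fintype.card V).choose 2 := by
  rw [← Set.ncard_union_eq (disjoint_edgeSet.2 disjoint_compl_right), ← edgeSet_sup,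
    sup_compl_eq_top, ncard_edgeSet_top]

theorem isIndContained_of_isIndContained_sum_bot (hG : ∀ v, ¬ G.IsIsolated v) {U : Type*}
    (h : G ⊴ H ⊕g (⊥ : SimpleGraph U)) : G ⊴ H := by
  obtain ⟨f⟩ := h
  have exists_inl (v : V) : ∃ w, f v = Sum.inl w := by
    obtain ⟨u, hvu⟩ : ∃ u, G.Adj v u := by simpa [IsIsolated] using hG v
    have hadj := f.map_adj_iff.2 hvu
    rcases hv : f v with w | x
    · exact ⟨w, rfl⟩
    · rcases hu : f u with w | y <;> simp [hv, hu] at hadj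
  choose g hg using exists_inl
  refine ⟨⟨⟨g, fun a b hab ↦ f.injective ?_⟩, fun {a b} ↦ ?_⟩⟩
  · rw [hg, hg, hab]
  · rw [← f.map_adj_iff, hg, hg, sum_adj_inl]
    rfl

theorem exists_equiv_apply_eq_apply_eq (e : V ≃ W) {a b : V} {c d : W}
    (hab : a ≠ b) (hcd : c ≠ d) : ∃ e' : V ≃ W, e' a = c ∧ e' b = d := by
  classical
  let e₁ := e.trans (Equiv.swap (e a) c)
  have h₁ : e₁ a = c := Equiv.swap_apply_left _ _
  refine ⟨e₁.trans (Equiv.swap (e₁ b) d), ?_, Equiv.swap_apply_left _ _⟩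
  rw [Equiv.trans_apply, h₁, Equiv.swap_apply_of_ne_of_ne _ hcd]
  exact h₁ ▸ e₁.injective.ne hab

theorem exists_eq_edge_of_ncard_edgeSet_eq_one (h : G.edgeSet.ncard = 1) :
    ∃ a b, a ≠ b ∧ G = edge a b := by
  obtain ⟨e, he⟩ := Set.ncard_eq_one.1 h
  induction e using Sym2.ind with
  | _ a b =>
    have hab : G.Adj a b := by rw [← mem_edgeSet, he]; rfl
    exact ⟨a, b, hab.ne, by rw [edge, ← he, fromEdgeSet_edgeSet]⟩

theorem nonempty_iso_edge (e : V ≃ W) {a b : V} {c d : W} (hab : a ≠ b) (hcd : c ≠ d) :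
    Nonempty (edge a b ≃g edge c d) := by
  obtain ⟨e', rfl, rfl⟩ := exists_equiv_apply_eq_apply_eq e hab hcd
  exact ⟨⟨e', by simp [edge_adj]⟩⟩

theorem nonempty_iso_of_ncard_edgeSet_le_one [Finite V] (e : V ≃ W)
    (hGH : G.edgeSet.ncard = H.edgeSet.ncard) (hG : G.edgeSet.ncard ≤ 1) :
    Nonempty (G ≃g H) := by
  have : Finite W := .of_equiv V e
  rcases Nat.le_one_iff_eq_zero_or_eq_one.1 hG with h₀ | h₁
  · obtain rfl : G = ⊥ := edgeSet_eq_empty.1 ((Set.ncard_eq_zero).1 h₀)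
    obtain rfl : H = ⊥ := edgeSet_eq_empty.1 ((Set.ncard_eq_zero).1 (hGH ▸ h₀))
    exact ⟨⟨e, by simp⟩⟩
  · obtain ⟨a, b, hab, rfl⟩ := exists_eq_edge_of_ncard_edgeSet_eq_one h₁
    obtain ⟨c, d, hcd, rfl⟩ := exists_eq_edge_of_ncard_edgeSet_eq_one (hGH ▸ h₁)
    exact nonempty_iso_edge e hab hcd

namespace IsClusterGraph

theorem bot : IsClusterGraph (⊥ : SimpleGraph V) :=
  fun _ _ _ h ↦ h.elim

theorem top : IsClusterGraph (⊤ : SimpleGraph V) :=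
  fun _ _ _ _ _ h ↦ h

theorem sum (hG : IsClusterGraph G) (hH : IsClusterGraph H) : IsClusterGraph (G ⊕g H) := by
  rintro (a | a) (b | b) (c | c) hab hbc hac
  case inl.inl.inl => exact hG hab hbc (ne_of_apply_ne _ hac)
  case inr.inr.inr => exact hH hab hbc (ne_of_apply_ne _ hac)
  all_goals simp at hab hbc

theorem of_isIndContained (hH : IsClusterGraph H) (h : G ⊴ H) : IsClusterGraph G := by
  obtain ⟨f⟩ := h
  exact fun a b c hab hbc hac ↦ f.map_adj_iff.1 <|
    hH (f.map_adj_iff.2 hab) (f.map_adj_iff.2 hbc) (f.injective.ne hac)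

end IsClusterGraph

end Graphs

section Feasibility

variable {V : Type*} {H : SimpleGraph V}

theorem FeasiblePair.mono {F F' : ∀ n : ℕ, SimpleGraph (Fin n) → Prop} {n m : ℕ}
    (h : FeasiblePair F n m) (hF : ∀ G, F n G → F' n G) : FeasiblePair F' n m :=
  let ⟨G, hG, hm⟩ := h
  ⟨G, hF G hG, hm⟩

theorem feasiblePair_indFreeFamily {W : Type*} [Fintype W] {G : SimpleGraph W} {n m : ℕ}
    (hG : ¬ H ⊴ G) (hn : Fintype.card W = n) (hm : G.edgeSet.ncard = m) :
    FeasiblePair (IndFreeFamily H) n m :=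
  ⟨G.overFin hn,
    fun h ↦ hG ((indContains_iff_isIndContained.1 h).trans (G.overFinIso hn).isIndContained'),
    (ncard_edgeSet_congr (G.overFinIso hn)).symm.trans hm⟩

theorem FeasiblePair.add_universal_vertex (hH : ∀ v, ¬ H.IsUniversal v) {n m : ℕ}
    (h : FeasiblePair (IndFreeFamily H) n m) : FeasiblePair (IndFreeFamily H) (n + 1) (m + n) := by
  obtain ⟨G, hG, hm⟩ := h
  have hHc : ∀ v, ¬ Hᶜ.IsIsolated v := by simpa only [isIsolated_compl_iff_isUniversal] using hH
  -- A universal vertex is added to `G` by adding an isolated vertex to its complement.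
  refine feasiblePair_indFreeFamily (G := (Gᶜ ⊕g (⊥ : SimpleGraph Unit))ᶜ) (fun h ↦ hG ?_)
    (by simp) ?_
  · have hc := h.compl
    rw [compl_compl] at hc
    exact indContains_iff_isIndContained.2
      (isIndContained_of_isIndContained_sum_bot hHc hc).of_compl
  · have hG' := ncard_edgeSet_add_compl G
    have hcone := ncard_edgeSet_add_compl (Gᶜ ⊕g (⊥ : SimpleGraph Unit))
    have hchoose : (n + 1).choose 2 = n + n.choose 2 := by
      rw [Nat.choose_succ_succ', Nat.choose_one_right]
    simp only [ncard_edgeSet_sum, edgeSet_bot, Set.ncard_empty, Fintype.card_sum, Fintype.card_fin,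
      Fintype.card_unit, hchoose] at hG' hcone
    omega

theorem feasible_of_sparse [Nonempty V] (hH : ∀ v, ¬ H.IsUniversal v)
    (hsparse : ∀ n m, m < n → FeasiblePair (IndFreeFamily H) (n + 1) m) :
    Feasible (IndFreeFamily H) := by
  suffices ∀ n m, m ≤ n * (n - 1) / 2 → FeasiblePair (IndFreeFamily H) n m from
    fun n m _ ↦ this n m
  intro n
  induction n with
  | zero =>
    intro m hm
    obtain rfl : m = 0 := by simpa using hm
    exact ⟨⊥, fun ⟨f, _⟩ ↦ (f (Classical.arbitrary V)).elim0, by simp⟩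
  | succ n ih =>
    intro m hm
    rw [Nat.triangle_succ] at hm
    rcases lt_or_ge m n with hmn | hnm
    · exact hsparse n m hmn
    · simpa only [Nat.sub_add_cancel hnm] using (ih (m - n) (by omega)).add_universal_vertex hH

theorem feasiblePair_isAcyclic {n m : ℕ} (hmn : m ≤ n) :
    FeasiblePair (fun _ G ↦ G.IsAcyclic) (n + 1) m := by
  classical
  have hstar : (starGraph (0 : Fin (n + 1))).edgeSet.ncard = n := by
    have := (isTree_starGraph (0 : Fin (n + 1))).card_edgeFinset
    rw [← coe_edgeFinset, Set.ncard_coe_finset]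
    simpa using this
  obtain ⟨T, hT, rfl⟩ := Set.exists_subset_card_eq (hmn.trans_eq hstar.symm)
  have hedges : (fromEdgeSet T).edgeSet = T := by
    rw [edgeSet_fromEdgeSet, sdiff_eq_left.2]
    exact Set.disjoint_left.2 fun e he ↦ not_isDiag_of_mem_edgeSet _ (hT he)
  have hle : fromEdgeSet T ≤ starGraph 0 := edgeSet_subset_edgeSet.1 (hedges.trans_subset hT)
  exact ⟨fromEdgeSet T, (isAcyclic_starGraph 0).anti hle, by rw [hedges]⟩

theorem feasible_of_not_isAcyclic (hH : ∀ v, ¬ H.IsUniversal v) (h : ¬ H.IsAcyclic) :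
    Feasible (IndFreeFamily H) := by
  have : Nonempty V := not_isEmpty_iff.1 fun _ ↦ h .of_subsingleton
  refine feasible_of_sparse hH fun n m hmn ↦ (feasiblePair_isAcyclic hmn.le).mono
    fun G hG hHG ↦ h ?_
  obtain ⟨f⟩ := indContains_iff_isIndContained.1 hHG
  exact hG.embedding f

theorem FeasiblePair.isClusterGraph_add_top {n m : ℕ}
    (h : FeasiblePair (fun _ G ↦ IsClusterGraph G) n m) (k : ℕ) :
    FeasiblePair (fun _ G ↦ IsClusterGraph G) (n + k) (m + k.choose 2) := by
  obtain ⟨G, hG, rfl⟩ := h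
  let e := (G ⊕g (⊤ : SimpleGraph (Fin k))).overFinIso (n := n + k) (by simp)
  refine ⟨_, (hG.sum .top).of_isIndContained e.isIndContained', ?_⟩
  rw [← ncard_edgeSet_congr e, ncard_edgeSet_sum, ncard_edgeSet_top, Fintype.card_fin]

theorem feasiblePair_isClusterGraph {n m : ℕ} (hmn : m + 2 ≤ n) :
    FeasiblePair (fun _ G ↦ IsClusterGraph G) n m := by
  -- `i` single vertices, `j` edges and `k` triangles
  have hpieces (i j k : ℕ) :
      FeasiblePair (fun _ G ↦ IsClusterGraph G) (i + 2 * j + 3 * k) (j + 3 * k) := by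
    induction k with
    | zero =>
      induction j with
      | zero => exact ⟨⊥, .bot, by simp⟩
      | succ j ih => exact ih.isClusterGraph_add_top 2
    | succ k ih => exact ih.isClusterGraph_add_top 3
  convert hpieces (n - 2 * (m % 3) - 3 * (m / 3)) (m % 3) (m / 3) using 1 <;> omega

theorem feasible_of_not_isClusterGraph (hH : ∀ v, ¬ H.IsUniversal v) (h : ¬ IsClusterGraph H) :
    Feasible (IndFreeFamily H) := by
  have : Nonempty V := not_isEmpty_iff.1 fun _ ↦ h fun a ↦ isEmptyElim a
  exact feasible_of_sparse hH fun n m hmn ↦ (feasiblePair_isClusterGraph (by omega)).mono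
    fun G hG hHG ↦ h (hG.of_isIndContained (indContains_iff_isIndContained.1 hHG))

theorem not_feasible_of_ncard_edgeSet_compl_le_one [Finite V] [Nonempty V]
    (h : Hᶜ.edgeSet.ncard ≤ 1) : ¬ Feasible (IndFreeFamily H) := by
  intro hfeas
  cases nonempty_fintype V
  have hH := ncard_edgeSet_add_compl H
  obtain ⟨G, hG, hGH⟩ := hfeas (Fintype.card V) H.edgeSet.ncard Fintype.card_pos
    (by rw [← Nat.choose_two_right]; omega)
  have hG' := ncard_edgeSet_add_compl G
  rw [Fintype.card_fin] at hG'
  obtain ⟨e⟩ := nonempty_iso_of_ncard_edgeSet_le_one (G := Hᶜ) (H := Gᶜ) (Fintype.equivFin V)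
    (by omega) h
  exact hG (indContains_iff_isIndContained.2 e.isIndContained.of_compl)

end Feasibility

section Hgraph

variable {p q r : ℕ}

theorem hgraph_adj_inl {i j : Fin p} : (Hgraph p q r).Adj (Sum.inl i) (Sum.inl j) ↔
    i ≠ j ∧ ¬ (i.val = 0 ∧ 1 ≤ j.val ∧ j.val ≤ q) ∧ ¬ (j.val = 0 ∧ 1 ≤ i.val ∧ i.val ≤ q) := by
  simp only [Hgraph, fromRel_adj, ne_eq, Sum.inl.injEq, ↓existsAndEq, true_and]
  tauto

theorem not_isUniversal_hgraph (hp : 1 ≤ p) (hr : 1 ≤ r) (v : Fin p ⊕ Fin r) :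
    ¬ (Hgraph p q r).IsUniversal v := by
  rcases v with i | j
  · exact fun h ↦ by simpa [Hgraph] using h (w := Sum.inr ⟨0, hr⟩) (by simp)
  · exact fun h ↦ by simpa [Hgraph] using h (w := Sum.inl ⟨0, hp⟩) (by simp)

theorem not_isAcyclic_hgraph_zero (hp : 3 ≤ p) : ¬ (Hgraph p 0 r).IsAcyclic := by
  intro h
  have htriangle : (Hgraph p 0 r).IsNClique 3
      {Sum.inl ⟨0, by omega⟩, Sum.inl ⟨1, by omega⟩, Sum.inl ⟨2, by omega⟩} :=
    is3Clique_triple_iff.2 (by simp [hgraph_adj_inl])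
  exact htriangle.not_cliqueFree (h.cliqueFree le_rfl)

theorem not_isClusterGraph_hgraph_one (hp : 3 ≤ p) : ¬ IsClusterGraph (Hgraph p 1 r) := by
  intro h
  have h₀₁ := @h (Sum.inl ⟨0, by omega⟩) (Sum.inl ⟨2, by omega⟩) (Sum.inl ⟨1, by omega⟩)
  simp [hgraph_adj_inl] at h₀₁

theorem ncard_edgeSet_compl_hgraph_le_one (hp : 2 ≤ p) (hq : q ≤ 1) :
    (Hgraph p q 0)ᶜ.edgeSet.ncard ≤ 1 := by
  refine (Set.ncard_le_ncard (t := {s(Sum.inl ⟨0, by omega⟩, Sum.inl ⟨1, by omega⟩)})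
    fun e he ↦ ?_).trans_eq (Set.ncard_singleton _)
  induction e using Sym2.ind with
  | _ a b =>
    rcases a with i | i
    · rcases b with j | j
      · simp only [mem_edgeSet, compl_adj, hgraph_adj_inl, ne_eq, Sum.inl.injEq, Fin.ext_iff] at he
        simp only [Set.mem_singleton_iff, Sym2.eq_iff, Sum.inl.injEq, Fin.ext_iff]
        omega
      · exact j.elim0
    · exact i.elim0

theorem feasible_indFreeFamily_H3_general (hp : 3 ≤ p) (hq : q ≤ 1) :
    Feasible (IndFreeFamily (Hgraph p q r)) ↔ 1 ≤ r := by
  have : Nonempty (Fin p ⊕ Fin r) := ⟨Sum.inl ⟨0, by omega⟩⟩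
  refine ⟨fun h ↦ ?_, fun hr ↦ ?_⟩
  · by_contra hr
    obtain rfl : r = 0 := by omega
    exact not_feasible_of_ncard_edgeSet_compl_le_one
      (ncard_edgeSet_compl_hgraph_le_one (by omega) hq) h
  · have huniv := not_isUniversal_hgraph (q := q) (by omega : 1 ≤ p) hr
    obtain rfl | rfl := Nat.le_one_iff_eq_zero_or_eq_one.1 hq
    · exact feasible_of_not_isAcyclic huniv (not_isAcyclic_hgraph_zero hp)
    · exact feasible_of_not_isClusterGraph huniv (not_isClusterGraph_hgraph_one hp)

end Hgraph

/-- For every `r ≥ 1`, the families `𝓕(H(3,0,r))` (no induced `K_3 ∪ rK_1`) and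
`𝓕(H(3,1,r))` (no induced `(K_3 ∖ K_2) ∪ rK_1`) are feasible, while for `r = 0`
neither family is feasible. -/
theorem feasible_indFreeFamily_H3 :
    (∀ r : ℕ, 1 ≤ r →
      Feasible (IndFreeFamily (Hgraph 3 0 r)) ∧ Feasible (IndFreeFamily (Hgraph 3 1 r))) ∧
    ¬ Feasible (IndFreeFamily (Hgraph 3 0 0)) ∧ ¬ Feasible (IndFreeFamily (Hgraph 3 1 0)) := by
  simp +contextual [feasible_indFreeFamily_H3_general]
end

section
/- Let k ≥ 3 and n ≥ k be integers and set t = ⌊(n − k + 2)/2⌋. Then for every integer m with n(n−1)/2 − t ≤ m ≤ n(n−1)/2 − 1, every finite simple graph on n vertices with exactly m edges contains an induced copy of K_k ∖ K_2; that is, all such pairs (n,m) are not feasible for the family 𝓕(K_k ∖ K_2). -/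
open SimpleGraph

/-- `K_k` with one edge removed (the edge between the vertices `0` and `1`). -/
def KminusEdge (k : ℕ) : SimpleGraph (Fin k) :=
  SimpleGraph.fromRel (fun a b => ¬ ((a.val = 0 ∧ b.val = 1) ∨ (a.val = 1 ∧ b.val = 0)))

/-!
A graph missing `e` edges has at most `2 * e` vertices that are incident with a missing edge, and
every other vertex is universal. The two endpoints of a missing edge together with `k - 2` universal
vertices induce a `K_k ∖ K_2`, so it is enough that `e ≥ 1` and `2 * e + (k - 2) ≤ n`.
-/

variable {V : Type*} {H : SimpleGraph V} {j k : ℕ}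

theorem kminusEdge_adj_iff {a b : Fin k} :
    (KminusEdge k).Adj a b ↔ a ≠ b ∧ (2 ≤ a.val ∨ 2 ≤ b.val) := by
  rw [KminusEdge, fromRel_adj, Ne, Fin.ext_iff]
  lia

theorem indContains_kminusEdge_of_isUniversal {u v : V} (huv : Hᶜ.Adj u v) (g : Fin j ↪ V)
    (hg : ∀ i, H.IsUniversal (g i)) : IndContains (KminusEdge (j + 2)) H := by
  have hnadj : ¬ H.Adj u v := ((compl_adj ..).1 huv).2
  have hgu : ∀ i, g i ≠ u := fun i h ↦ hnadj (h ▸ hg i (h.trans_ne huv.ne))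
  have hgv : ∀ i, g i ≠ v := fun i h ↦ hnadj (h ▸ hg i (h.trans_ne huv.ne')).symm
  have hv : v ∉ Set.range g := by simpa using hgv
  have hu : u ∉ Set.range (Fin.Embedding.cons g hv) := by
    simpa [Fin.range_cons, huv.ne] using hgu
  have hadj_u : ∀ i, H.Adj u (g i) := fun i ↦ (hg i (hgu i)).symm
  have hadj_v : ∀ i, H.Adj v (g i) := fun i ↦ (hg i (hgv i)).symm
  have hadj_g : ∀ i i', H.Adj (g i) (g i') ↔ i ≠ i' := fun i i' ↦
    ⟨fun h ↦ ne_of_apply_ne g h.ne, fun h ↦ hg i (g.injective.ne h)⟩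
  refine ⟨Fin.Embedding.cons (Fin.Embedding.cons g hv) hu, ?_⟩
  -- Compare the two adjacency relations block by block, along `u`, `v` and the range of `g`.
  simp only [Fin.forall_fin_succ, Fin.Embedding.coe_cons, Fin.cons_zero, Fin.cons_succ]
  simp [kminusEdge_adj_iff, Fin.ext_iff, hnadj, mt Adj.symm hnadj, hadj_u, hadj_v, hadj_g,
    fun i ↦ (hadj_u i).symm, fun i ↦ (hadj_v i).symm]

theorem encard_support_le_two_mul_encard_edgeSet (G : SimpleGraph V) :
    G.support.encard ≤ 2 * G.edgeSet.encard := by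
  obtain hinf | hfin := G.edgeSet.finite_or_infinite.symm
  · simp [hinf.encard_eq]
  have hcover : G.support ⊆ ⋃ e ∈ hfin.toFinset, (e : Set V) := by
    rintro v ⟨w, hvw⟩
    simpa using ⟨s(v, w), hvw, Sym2.mem_mk_left v w⟩
  have hpair (e : Sym2 V) : (e : Set V).encard ≤ 2 := by
    induction e with | _ v w =>
    rw [Sym2.coe_mk]
    exact (Set.encard_insert_le {w} v).trans_eq (by rw [Set.encard_singleton, one_add_one_eq_two])
  calc G.support.encard
      ≤ ∑ e ∈ hfin.toFinset, (e : Set V).encard :=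
        (Set.encard_le_encard hcover).trans (Finset.set_encard_biUnion_le _ _)
    _ ≤ ∑ _e ∈ hfin.toFinset, 2 := Finset.sum_le_sum fun e _ ↦ hpair e
    _ = 2 * G.edgeSet.encard := by
        rw [Finset.sum_const, nsmul_eq_mul, mul_comm, hfin.encard_eq_coe_toFinset_card]

theorem ncard_edgeSet_add_ncard_edgeSet_compl [Finite V] (G : SimpleGraph V) :
    G.edgeSet.ncard + Gᶜ.edgeSet.ncard = (Nat.card V).choose 2 := by
  rw [← Set.ncard_union_eq (disjoint_edgeSet.2 disjoint_compl_right), ← edgeSet_sup,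
    sup_compl_eq_top, edgeSet_top, Sym2.ncard_diagSet_compl]

theorem indContains_kminusEdge_of_two_mul_encard_edgeSet_compl_add_le (hne : H ≠ ⊤)
    (hfin : Hᶜ.edgeSet.Finite) (hcard : 2 * Hᶜ.edgeSet.encard + j ≤ ENat.card V) :
    IndContains (KminusEdge (j + 2)) H := by
  have hsupp := encard_support_le_two_mul_encard_edgeSet Hᶜ
  have : Finite Hᶜ.support := Set.encard_lt_top_iff.1 <|
    hsupp.trans_lt <| WithTop.mul_lt_top (ENat.natCast_lt_top 2) hfin.encard_lt_top
  obtain ⟨g, hg⟩ : ∃ g : Fin j ↪ V, Disjoint Hᶜ.support (Set.range g) := by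
    apply Fin.Embedding.exists_embedding_disjoint_range_of_add_le_ENat_card
    grw [(Set.toFinite _).cast_ncard_eq, hsupp, hcard]
  obtain ⟨u, v, huv⟩ := ne_bot_iff_exists_adj.1 (compl_eq_bot.not.2 hne)
  refine indContains_kminusEdge_of_isUniversal huv g fun i ↦ ?_
  rw [← isIsolated_compl_iff_isUniversal, ← notMem_support_iff_isIsolated]
  exact Set.disjoint_right.1 hg (Set.mem_range_self i)

/-- Let `k ≥ 3`, `n ≥ k` and `t = ⌊(n - k + 2)/2⌋`.  For every `m` with
`n(n-1)/2 - t ≤ m ≤ n(n-1)/2 - 1`, every graph on `n` vertices with exactly `m` edges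
contains an induced `K_k ∖ K_2`; that is, all such pairs `(n, m)` are not feasible
for the family `𝓕(K_k ∖ K_2)`. -/
theorem forces_KkMinusEdge (k n m : ℕ) (hk : 3 ≤ k) (hn : k ≤ n)
    (hm1 : n * (n - 1) / 2 - (n - k + 2) / 2 ≤ m) (hm2 : m ≤ n * (n - 1) / 2 - 1) :
    (∀ (V : Type) [Fintype V], Fintype.card V = n → ∀ H : SimpleGraph V,
      H.edgeSet.ncard = m → IndContains (KminusEdge k) H) ∧
    ¬ FeasiblePair (IndFreeFamily (KminusEdge k)) n m := by
  suffices forces : ∀ (V : Type) [Fintype V], Fintype.card V = n → ∀ H : SimpleGraph V,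
      H.edgeSet.ncard = m → IndContains (KminusEdge k) H from
    ⟨forces, fun ⟨G, hfree, hGm⟩ ↦ hfree (forces (Fin n) (Fintype.card_fin n) G hGm)⟩
  intro V _ hV H hHm
  obtain ⟨j, rfl⟩ : ∃ j, k = j + 2 := Nat.exists_eq_add_of_le' (by lia)
  have hpos : 0 < n.choose 2 := Nat.choose_pos (by lia)
  have hcompl : m + Hᶜ.edgeSet.ncard = n.choose 2 := by
    rw [← hHm, ncard_edgeSet_add_ncard_edgeSet_compl, Nat.card_eq_fintype_card, hV]
  rw [← Nat.choose_two_right] at hm1 hm2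
  have hne : H ≠ ⊤ := by
    rintro rfl
    rw [compl_top, edgeSet_bot, Set.ncard_empty] at hcompl
    lia
  have hmissing : 2 * Hᶜ.edgeSet.ncard + j ≤ n := by lia
  refine indContains_kminusEdge_of_two_mul_encard_edgeSet_compl_add_le hne Hᶜ.edgeSet.toFinite ?_
  rw [← Hᶜ.edgeSet.toFinite.cast_ncard_eq, ENat.card_eq_coe_fintype_card, hV]
  exact_mod_cast hmissing
end
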